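/- Let μ be a probability measure on a measurable space Ω and let B ⊆ Ω be a nonempty measurable set. Then 1/μ(B) = min{ G(ν‖μ) : ν a probability measure on Ω with ν(B) = 1 }, as an equality in [0,+∞] with 1/0 = +∞, and the minimum is attained (when μ(B) > 0, by the conditional measure μ(·|B)). -/

import Mathlib

open MeasureTheory Filter Topology ProbabilityTheory
open scoped ENNReal

noncomputable section

/-- `G(ν‖μ) = ∫ (dν/dμ) dν` if `ν ≪ μ`, `+∞` otherwise. -/
def Gdiv {Ω : Type} [MeasurableSpace Ω] (ν μ : Measure Ω) : ℝ≥0∞ :=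
  open Classical in
  if ν ≪ μ then ∫⁻ x, ν.rnDeriv μ x ∂ν else ⊤

/-!
For `ν ≪ μ` with density `f`, the value `G(ν‖μ) = ∫ f² dμ` is a squared `L²` norm, so Cauchy–Schwarz
on `B` gives `ν(B)² ≤ μ(B) · G(ν‖μ)`. Conversely, a density bounded by `c` gives
`G(ν‖μ) = ∫ f dν ≤ c · ν(Ω)`, and the density of `μ[|B]` is bounded by `1/μ(B)`.
When `μ(B) = 0` every `ν` with `ν(B) = 1` has `G(ν‖μ) = ∞`,
and a Dirac mass at a point of `B` is one.
-/

section Measure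

variable {α : Type*} [MeasurableSpace α] {μ ν : Measure α}

theorem sq_lintegral_le_measure_univ_mul_lintegral_sq {f : α → ℝ≥0∞} (hf : AEMeasurable f μ) :
    (∫⁻ x, f x ∂μ) ^ 2 ≤ μ Set.univ * ∫⁻ x, f x ^ 2 ∂μ := by
  have holder : ∫⁻ x, f x ∂μ ≤ μ Set.univ ^ (2⁻¹ : ℝ) * (∫⁻ x, f x ^ 2 ∂μ) ^ (2⁻¹ : ℝ) := by
    simpa using ENNReal.lintegral_mul_le_Lp_mul_Lq μ Real.HolderConjugate.two_two
      (aemeasurable_const (b := 1)) hf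
  calc (∫⁻ x, f x ∂μ) ^ 2
      ≤ (μ Set.univ ^ (2⁻¹ : ℝ) * (∫⁻ x, f x ^ 2 ∂μ) ^ (2⁻¹ : ℝ)) ^ 2 := by gcongr
    _ = μ Set.univ * ∫⁻ x, f x ^ 2 ∂μ := by
      rw [← ENNReal.mul_rpow_of_nonneg _ _ (by norm_num)]
      exact ENNReal.rpow_inv_natCast_pow two_ne_zero _

theorem rnDeriv_ae_le_of_le_smul [SigmaFinite μ] {c : ℝ≥0∞} (h : ν ≤ c • μ) :
    ∀ᵐ x ∂μ, ν.rnDeriv μ x ≤ c := by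
  refine ae_le_of_forall_setLIntegral_le_of_sigmaFinite (ν.measurable_rnDeriv μ) fun s _ _ ↦ ?_
  calc ∫⁻ x in s, ν.rnDeriv μ x ∂μ
      ≤ ν s := Measure.setLIntegral_rnDeriv_le s
    _ ≤ c * μ s := h s
    _ = ∫⁻ _ in s, c ∂μ := (setLIntegral_const s c).symm

theorem cond_le_inv_smul (μ : Measure α) (s : Set α) : μ[|s] ≤ (μ s)⁻¹ • μ := by
  rw [ProbabilityTheory.cond]
  gcongr
  exact Measure.restrict_le_self

end Measure

section Gdiv

variable {Ω : Type} [MeasurableSpace Ω] {μ ν : Measure Ω}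

theorem Gdiv_of_absolutelyContinuous (h : ν ≪ μ) : Gdiv ν μ = ∫⁻ x, ν.rnDeriv μ x ∂ν :=
  if_pos h

theorem Gdiv_of_not_absolutelyContinuous (h : ¬ν ≪ μ) : Gdiv ν μ = ∞ :=
  if_neg h

theorem Gdiv_eq_lintegral_rnDeriv_sq [ν.HaveLebesgueDecomposition μ] (h : ν ≪ μ) :
    Gdiv ν μ = ∫⁻ x, ν.rnDeriv μ x ^ 2 ∂μ := by
  simp only [Gdiv_of_absolutelyContinuous h, sq]
  exact (lintegral_rnDeriv_mul h (ν.measurable_rnDeriv μ).aemeasurable).symm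

theorem sq_measure_div_le_Gdiv [SFinite μ] [ν.HaveLebesgueDecomposition μ] (s : Set Ω) :
    ν s ^ 2 / μ s ≤ Gdiv ν μ := by
  by_cases h : ν ≪ μ
  · refine ENNReal.div_le_of_le_mul' ?_
    calc ν s ^ 2
        = (∫⁻ x in s, ν.rnDeriv μ x ∂μ) ^ 2 := by rw [Measure.setLIntegral_rnDeriv h]
      _ ≤ μ s * ∫⁻ x in s, ν.rnDeriv μ x ^ 2 ∂μ := by
        simpa only [Measure.restrict_apply_univ] using
          sq_lintegral_le_measure_univ_mul_lintegral_sq (μ := μ.restrict s)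
            (ν.measurable_rnDeriv μ).aemeasurable
      _ ≤ μ s * ∫⁻ x, ν.rnDeriv μ x ^ 2 ∂μ := by gcongr; exact Measure.restrict_le_self
      _ = μ s * Gdiv ν μ := by rw [Gdiv_eq_lintegral_rnDeriv_sq h]
  · rw [Gdiv_of_not_absolutelyContinuous h]
    exact le_top

theorem Gdiv_le_mul_of_le_smul [SigmaFinite μ] {c : ℝ≥0∞} (h : ν ≤ c • μ) :
    Gdiv ν μ ≤ c * ν Set.univ := by
  have hac : ν ≪ μ := Measure.absolutelyContinuous_of_le_smul h
  calc Gdiv ν μ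
      = ∫⁻ x, ν.rnDeriv μ x ∂ν := Gdiv_of_absolutelyContinuous hac
    _ ≤ ∫⁻ _, c ∂ν := lintegral_mono_ae (hac.ae_le (rnDeriv_ae_le_of_le_smul h))
    _ = c * ν Set.univ := lintegral_const c

theorem inv_measure_le_Gdiv [SFinite μ] [ν.HaveLebesgueDecomposition μ] {s : Set Ω}
    (hs : ν s = 1) : (μ s)⁻¹ ≤ Gdiv ν μ := by
  simpa [hs] using sq_measure_div_le_Gdiv (μ := μ) (ν := ν) s

theorem Gdiv_cond_le [SigmaFinite μ] (s : Set Ω) : Gdiv μ[|s] μ ≤ (μ s)⁻¹ :=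
  (Gdiv_le_mul_of_le_smul (cond_le_inv_smul μ s)).trans (mul_le_of_le_one_right' prob_le_one)

theorem exists_isProbabilityMeasure_Gdiv_le_inv_measure [SigmaFinite μ] {s : Set Ω}
    (hs : s.Nonempty) (hμs : μ s ≠ ∞) :
    ∃ ν : Measure Ω, IsProbabilityMeasure ν ∧ ν s = 1 ∧ Gdiv ν μ ≤ (μ s)⁻¹ ∧
      (μ s ≠ 0 → ν = μ[|s]) := by
  by_cases h0 : μ s = 0
  · obtain ⟨x, hx⟩ := hs
    exact ⟨Measure.dirac x, inferInstance, Measure.dirac_apply_of_mem hx, by simp [h0],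
      fun h ↦ absurd h0 h⟩
  · exact ⟨μ[|s], cond_isProbabilityMeasure_of_finite h0 hμs, cond_apply_self h0 hμs,
      Gdiv_cond_le s, fun _ ↦ rfl⟩

end Gdiv

theorem statement15_general {Ω : Type} [MeasurableSpace Ω] (μ : Measure Ω) [SigmaFinite μ]
    {B : Set Ω} (hBne : B.Nonempty) (hμB : μ B ≠ ∞) :
    ∃ ν : Measure Ω, IsProbabilityMeasure ν ∧ ν B = 1 ∧
      Gdiv ν μ = (μ B)⁻¹ ∧
      (∀ ν' : Measure Ω, IsProbabilityMeasure ν' → ν' B = 1 → Gdiv ν μ ≤ Gdiv ν' μ) ∧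
      (μ B ≠ 0 → ν = μ[|B]) := by
  obtain ⟨ν, hν, hνB, hG, hcond⟩ := exists_isProbabilityMeasure_Gdiv_le_inv_measure hBne hμB
  exact ⟨ν, hν, hνB, hG.antisymm (inv_measure_le_Gdiv hνB),
    fun ν' _ hν'B ↦ hG.trans (inv_measure_le_Gdiv hν'B), hcond⟩

theorem statement15
    (Ω : Type) [MeasurableSpace Ω] (μ : Measure Ω) (hμ : IsProbabilityMeasure μ)
    (B : Set Ω) (hBne : B.Nonempty) (hB : MeasurableSet B) :
    ∃ ν : Measure Ω, IsProbabilityMeasure ν ∧ ν B = 1 ∧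
      Gdiv ν μ = (μ B)⁻¹ ∧
      (∀ ν' : Measure Ω, IsProbabilityMeasure ν' → ν' B = 1 → Gdiv ν μ ≤ Gdiv ν' μ) ∧
      (μ B ≠ 0 → ν = μ[|B]) :=
  statement15_general μ hBne (measure_ne_top μ B)

end
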